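/- arXiv:cs/0702099 — 3 statements merged into one kernel-verified Lean document; each statement's English description precedes it below -/
import Mathlib

section
/- Let U, V1, V2, Y1, Y2 be random variables defined on a common finite probability space. Define Δ1 = I(V1;Y1|U) − I(V1;Y2|U), Δ2 = I(V2;Y2|U) − I(V2;Y1|U), Θ1 = I(V1;Y1|V2,U) − I(V1;Y2|V2,U), and Θ2 = I(V2;Y2|V1,U) − I(V2;Y1|V1,U). Then Δ1 + Δ2 = Θ1 + Θ2, and consequently min(Δ1 + Θ2, Δ2 + Θ1) ≤ Δ1 + Δ2. -/
open scoped BigOperators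

open Classical in
/-- Probability mass `P(X = x)` under the weight function `p` on the finite sample space. -/
noncomputable def pm {Ω α : Type*} [Fintype Ω] [Fintype α]
    (p : Ω → ℝ) (X : Ω → α) (x : α) : ℝ :=
  ∑ ω, if X ω = x then p ω else 0

/-- Shannon entropy `H(X)` (with the convention `0 · log 0 = 0`, since `Real.log 0 = 0`). -/
noncomputable def ent {Ω α : Type*} [Fintype Ω] [Fintype α]
    (p : Ω → ℝ) (X : Ω → α) : ℝ :=
  ∑ x, -(pm p X x * Real.log (pm p X x))

/-- Conditional entropy `H(X|Y) = H(X,Y) - H(Y)`. -/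
noncomputable def condEnt {Ω α β : Type*} [Fintype Ω] [Fintype α] [Fintype β]
    (p : Ω → ℝ) (X : Ω → α) (Y : Ω → β) : ℝ :=
  ent p (fun ω => (X ω, Y ω)) - ent p Y

/-- Mutual information `I(X;Y) = H(X) + H(Y) - H(X,Y)`. -/
noncomputable def mutI {Ω α β : Type*} [Fintype Ω] [Fintype α] [Fintype β]
    (p : Ω → ℝ) (X : Ω → α) (Y : Ω → β) : ℝ :=
  ent p X + ent p Y - ent p (fun ω => (X ω, Y ω))

/-- Conditional mutual information `I(X;Y|Z) = H(X|Z) - H(X|(Y,Z))`. -/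
noncomputable def condMutI {Ω α β γ : Type*} [Fintype Ω] [Fintype α] [Fintype β] [Fintype γ]
    (p : Ω → ℝ) (X : Ω → α) (Y : Ω → β) (Z : Ω → γ) : ℝ :=
  condEnt p X Z - condEnt p X (fun ω => (Y ω, Z ω))

theorem ent_equiv_aux {Ω α β : Type*} [Fintype Ω] [Fintype α] [Fintype β]
    (p : Ω → ℝ) (X : Ω → α) (e : α ≃ β) : ent p (fun ω => e (X ω)) = ent p X := by
  unfold ent
  rw [← e.sum_comp]
  have h : ∀ x, pm p (fun ω => e (X ω)) (e x) = pm p X x := by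
    intro x
    unfold pm
    refine Finset.sum_congr rfl fun ω _ => ?_
    by_cases hx : X ω = x
    · rw [if_pos hx, if_pos (congrArg e hx)]
    · rw [if_neg hx, if_neg (fun h => hx (e.injective h))]
  simp only [h]

theorem ent_swap3 {Ω α β γ : Type*} [Fintype Ω] [Fintype α] [Fintype β] [Fintype γ]
    (p : Ω → ℝ) (X : Ω → α) (Y : Ω → β) (Z : Ω → γ) :
    ent p (fun ω => (X ω, Y ω, Z ω)) = ent p (fun ω => (Y ω, X ω, Z ω)) :=
  ent_equiv_aux p (fun ω => (Y ω, X ω, Z ω))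
    ⟨fun t => (t.2.1, t.1, t.2.2), fun t => (t.2.1, t.1, t.2.2), fun _ => rfl, fun _ => rfl⟩

theorem ent_swap4 {Ω α β γ δ : Type*} [Fintype Ω] [Fintype α] [Fintype β] [Fintype γ] [Fintype δ]
    (p : Ω → ℝ) (X : Ω → α) (Y : Ω → β) (Z : Ω → γ) (W : Ω → δ) :
    ent p (fun ω => (X ω, Y ω, Z ω, W ω)) = ent p (fun ω => (Z ω, Y ω, X ω, W ω)) :=
  ent_equiv_aux p (fun ω => (Z ω, Y ω, X ω, W ω))
    ⟨fun t => (t.2.2.1, t.2.1, t.1, t.2.2.2), fun t => (t.2.2.1, t.2.1, t.1, t.2.2.2),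
      fun _ => rfl, fun _ => rfl⟩

/-- Lemma 1: `Δ1 + Δ2 = Θ1 + Θ2`, hence `min(Δ1+Θ2, Δ2+Θ1) ≤ Δ1 + Δ2`. -/
theorem sum_rate_bounds_identity_and_min
    {Ω αU α1 α2 β1 β2 : Type*} [Fintype Ω] [Fintype αU] [Fintype α1] [Fintype α2]
    [Fintype β1] [Fintype β2]
    (p : Ω → ℝ) (hp : ∀ ω, 0 ≤ p ω) (hp1 : ∑ ω, p ω = 1)
    (U : Ω → αU) (V1 : Ω → α1) (V2 : Ω → α2) (Y1 : Ω → β1) (Y2 : Ω → β2) :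
    let Δ1 := condMutI p V1 Y1 U - condMutI p V1 Y2 U
    let Δ2 := condMutI p V2 Y2 U - condMutI p V2 Y1 U
    let Θ1 := condMutI p V1 Y1 (fun ω => (V2 ω, U ω))
      - condMutI p V1 Y2 (fun ω => (V2 ω, U ω))
    let Θ2 := condMutI p V2 Y2 (fun ω => (V1 ω, U ω))
      - condMutI p V2 Y1 (fun ω => (V1 ω, U ω))
    Δ1 + Δ2 = Θ1 + Θ2 ∧ min (Δ1 + Θ2) (Δ2 + Θ1) ≤ Δ1 + Δ2 := by
  intro Δ1 Δ2 Θ1 Θ2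
  have key : Δ1 + Δ2 = Θ1 + Θ2 := by
    simp only [Δ1, Δ2, Θ1, Θ2, condMutI, condEnt]
    have a1 := ent_swap4 p V1 Y1 V2 U
    have a2 := ent_swap4 p V1 Y2 V2 U
    have b1 := ent_swap3 p V1 Y1 U
    have b2 := ent_swap3 p V1 Y2 U
    have b3 := ent_swap3 p V2 Y1 U
    have b4 := ent_swap3 p V2 Y2 U
    have b5 := ent_swap3 p V1 V2 U
    linarith
  refine ⟨key, ?_⟩
  rcases le_total (Δ1 + Θ2) (Δ2 + Θ1) with h | h
  · rw [min_eq_left h]; linarith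
  · rw [min_eq_right h]; linarith
end

section
/- Let U, V1, V2, Y1, Y2 be random variables defined on a common finite probability space. If I(V1;V2|U) = 0, I(V1;V2|Y1,U) = 0, and I(V1;V2|Y2,U) = 0, then I(V1;Y1|V2,U) − I(V1;Y2|V2,U) = I(V1;Y1|U) − I(V1;Y2|U) and I(V2;Y2|V1,U) − I(V2;Y1|V1,U) = I(V2;Y2|U) − I(V2;Y1|U); in particular, the two expressions inside each minimum of the outer bound of Theorem 1 coincide. -/
open scoped BigOperators

theorem ent_swap_aux {Ω α β γ : Type*} [Fintype Ω] [Fintype α] [Fintype β] [Fintype γ]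
    (p : Ω → ℝ) (X : Ω → α) (Y : Ω → β) (Z : Ω → γ) :
    ent p (fun ω => (X ω, (Y ω, Z ω))) = ent p (fun ω => (Y ω, (X ω, Z ω))) :=
  ent_equiv_aux p (fun ω => (Y ω, (X ω, Z ω)))
    ⟨fun t => (t.2.1, (t.1, t.2.2)), fun t => (t.2.1, (t.1, t.2.2)), fun _ => rfl, fun _ => rfl⟩

theorem ent_swap_aux2 {Ω α β γ δ : Type*} [Fintype Ω] [Fintype α] [Fintype β] [Fintype γ]
    [Fintype δ] (p : Ω → ℝ) (X : Ω → α) (Y : Ω → β) (Z : Ω → γ) (W : Ω → δ) :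
    ent p (fun ω => (X ω, (Y ω, (Z ω, W ω)))) = ent p (fun ω => (X ω, (Z ω, (Y ω, W ω)))) :=
  ent_equiv_aux p (fun ω => (X ω, (Z ω, (Y ω, W ω))))
    ⟨fun t => (t.1, (t.2.2.1, (t.2.1, t.2.2.2))), fun t => (t.1, (t.2.2.1, (t.2.1, t.2.2.2))),
      fun _ => rfl, fun _ => rfl⟩

/-- Collapse of the outer bound onto the inner bound for the switch channel:
under `I(V1;V2|U) = I(V1;V2|Y1,U) = I(V1;V2|Y2,U) = 0`, the two expressions inside
each minimum of the outer bound of Theorem 1 coincide. -/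
theorem switch_channel_outer_bound_collapse
    {Ω αU α1 α2 β1 β2 : Type*} [Fintype Ω] [Fintype αU] [Fintype α1] [Fintype α2]
    [Fintype β1] [Fintype β2]
    (p : Ω → ℝ) (hp : ∀ ω, 0 ≤ p ω) (hp1 : ∑ ω, p ω = 1)
    (U : Ω → αU) (V1 : Ω → α1) (V2 : Ω → α2) (Y1 : Ω → β1) (Y2 : Ω → β2)
    (h0 : condMutI p V1 V2 U = 0)
    (h1 : condMutI p V1 V2 (fun ω => (Y1 ω, U ω)) = 0)
    (h2 : condMutI p V1 V2 (fun ω => (Y2 ω, U ω)) = 0) :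
    (condMutI p V1 Y1 (fun ω => (V2 ω, U ω)) - condMutI p V1 Y2 (fun ω => (V2 ω, U ω))
        = condMutI p V1 Y1 U - condMutI p V1 Y2 U)
    ∧
    (condMutI p V2 Y2 (fun ω => (V1 ω, U ω)) - condMutI p V2 Y1 (fun ω => (V1 ω, U ω))
        = condMutI p V2 Y2 U - condMutI p V2 Y1 U) := by
  simp only [condMutI, condEnt] at *
  have a1 := ent_swap_aux p V2 Y1 U
  have a2 := ent_swap_aux p V2 Y2 U
  have a3 := ent_swap_aux p V1 Y1 U
  have a4 := ent_swap_aux p V1 Y2 U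
  have a5 := ent_swap_aux p V1 V2 U
  have b1 := ent_swap_aux2 p V1 V2 Y1 U
  have b2 := ent_swap_aux2 p V1 V2 Y2 U
  have b3 := ent_swap_aux2 p V2 V1 Y1 U
  have b4 := ent_swap_aux2 p V2 V1 Y2 U
  have c1 := ent_swap_aux p V1 V2 (fun ω => (Y1 ω, U ω))
  have c2 := ent_swap_aux p V1 V2 (fun ω => (Y2 ω, U ω))
  constructor <;> linarith
end

section
/- Let W1, V1, V2, U, Y2 be random variables defined on a common finite probability space, and suppose the Markov chain condition I(W1; Y2 | V1, V2, U) = 0 holds. Then H(W1|Y2) ≥ H(V1|V2,U) − H(V1 | Y2, V2, U, W1) − I(V1; Y2 | V2, U). -/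
open scoped BigOperators

theorem sum_fiber {Ω α : Type*} [Fintype Ω] [Fintype α]
    (p : Ω → ℝ) (X : Ω → α) (f : α → ℝ) :
    ∑ x, pm p X x * f x = ∑ ω, p ω * f (X ω) := by
  classical
  unfold pm
  simp_rw [Finset.sum_mul]
  rw [Finset.sum_comm]
  refine Finset.sum_congr rfl fun ω _ => ?_
  rw [Finset.sum_eq_single (X ω)]
  · simp
  · intro b _ hb
    simp [Ne.symm hb]
  · simp

theorem ent_eq {Ω α : Type*} [Fintype Ω] [Fintype α] (p : Ω → ℝ) (X : Ω → α) :
    ent p X = - ∑ ω, p ω * Real.log (pm p X (X ω)) := by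
  rw [← sum_fiber p X (fun x => Real.log (pm p X x))]
  simp [ent]

theorem pm_nonneg {Ω α : Type*} [Fintype Ω] [Fintype α] (p : Ω → ℝ) (hp : ∀ ω, 0 ≤ p ω)
    (X : Ω → α) (x : α) : 0 ≤ pm p X x := by
  classical
  unfold pm
  refine Finset.sum_nonneg fun ω _ => ?_
  split_ifs
  · exact hp ω
  · exact le_rfl

theorem le_pm {Ω α : Type*} [Fintype Ω] [Fintype α] (p : Ω → ℝ) (hp : ∀ ω, 0 ≤ p ω)
    (X : Ω → α) (ω : Ω) : p ω ≤ pm p X (X ω) := by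
  classical
  unfold pm
  have := Finset.single_le_sum (f := fun ω' => if X ω' = X ω then p ω' else 0)
    (fun ω' _ => by
      show 0 ≤ if X ω' = X ω then p ω' else 0
      split_ifs
      · exact hp ω'
      · exact le_rfl) (Finset.mem_univ ω)
  simpa using this

theorem ent_mono {Ω α β : Type*} [Fintype Ω] [Fintype α] [Fintype β] (p : Ω → ℝ)
    (hp : ∀ ω, 0 ≤ p ω) (X : Ω → α) (Z : Ω → β)
    (h : ∀ ω ω', Z ω = Z ω' → X ω = X ω') : ent p X ≤ ent p Z := by
  classical
  rw [ent_eq, ent_eq, neg_le_neg_iff]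
  refine Finset.sum_le_sum fun ω _ => ?_
  rcases (hp ω).eq_or_lt with h0 | h0
  · simp [← h0]
  refine mul_le_mul_of_nonneg_left ?_ (hp ω)
  refine Real.log_le_log (lt_of_lt_of_le h0 (le_pm p hp Z ω)) ?_
  unfold pm
  refine Finset.sum_le_sum fun ω' _ => ?_
  by_cases hz : Z ω' = Z ω
  · simp [hz, h _ _ hz]
  · simp only [hz, if_false]
    split_ifs
    · exact hp ω'
    · exact le_rfl

theorem pm_marg {Ω α β : Type*} [Fintype Ω] [Fintype α] [Fintype β] (p : Ω → ℝ)
    (X : Ω → α) (Y : Ω → β) (y : β) :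
    ∑ x, pm p (fun ω => (X ω, Y ω)) (x, y) = pm p Y y := by
  classical
  unfold pm
  rw [Finset.sum_comm]
  refine Finset.sum_congr rfl fun ω _ => ?_
  rw [Finset.sum_eq_single (X ω)]
  · simp
  · intro b _ hb
    simp [Ne.symm hb]
  · simp

theorem pm_total {Ω α : Type*} [Fintype Ω] [Fintype α] (p : Ω → ℝ) (X : Ω → α) :
    ∑ x, pm p X x = ∑ ω, p ω := by
  simpa using sum_fiber p X (fun _ => 1)

theorem ent_submod {Ω α β γ : Type*} [Fintype Ω] [Fintype α] [Fintype β] [Fintype γ]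
    (p : Ω → ℝ) (hp : ∀ ω, 0 ≤ p ω) (A : Ω → α) (W : Ω → γ) (Y : Ω → β) :
    ent p (fun ω => (A ω, W ω, Y ω)) + ent p Y
      ≤ ent p (fun ω => (A ω, Y ω)) + ent p (fun ω => (W ω, Y ω)) := by
  classical
  let f : α × γ × β → ℝ := fun x =>
    pm p (fun ω => (A ω, Y ω)) (x.1, x.2.2) * pm p (fun ω => (W ω, Y ω)) (x.2.1, x.2.2)
      / pm p Y x.2.2
  have hf : ∀ x, 0 ≤ f x := fun x =>
    div_nonneg (mul_nonneg (pm_nonneg p hp _ _) (pm_nonneg p hp _ _)) (pm_nonneg p hp _ _)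
  have hfs : ∑ x, f x ≤ ∑ ω, p ω := by
    have h1 : ∑ x, f x = ∑ y, ∑ a, ∑ w, f (a, w, y) := by
      rw [Fintype.sum_prod_type]
      simp_rw [Fintype.sum_prod_type]
      rw [Finset.sum_comm]
      conv_rhs => rw [Finset.sum_comm]
      rw [Finset.sum_comm]
      exact Finset.sum_congr rfl fun a _ => Finset.sum_comm
    rw [h1, ← pm_total p Y]
    refine Finset.sum_le_sum fun y _ => ?_
    have h2 : ∑ a, ∑ w, f (a, w, y) = pm p Y y * pm p Y y / pm p Y y := by
      simp only [f]
      simp_rw [← Finset.sum_div, ← Finset.mul_sum, ← Finset.sum_mul]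
      rw [pm_marg p W Y y, pm_marg p A Y y]
    rw [h2, mul_self_div_self]
  have hx : ∑ ω, p ω * (f (A ω, W ω, Y ω) / pm p (fun ω => (A ω, W ω, Y ω)) (A ω, W ω, Y ω))
      ≤ ∑ ω, p ω := by
    rw [← sum_fiber p (fun ω => (A ω, W ω, Y ω))
      (fun x => f x / pm p (fun ω => (A ω, W ω, Y ω)) x)]
    refine le_trans (Finset.sum_le_sum fun x _ => ?_) hfs
    by_cases h0 : pm p (fun ω => (A ω, W ω, Y ω)) x = 0
    · rw [h0, zero_mul]; exact hf x
    · rw [mul_div_cancel₀ _ h0]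
  have key : ∑ ω, (p ω * Real.log (pm p (fun ω => (A ω, Y ω)) (A ω, Y ω))
      + p ω * Real.log (pm p (fun ω => (W ω, Y ω)) (W ω, Y ω))
      - p ω * Real.log (pm p (fun ω => (A ω, W ω, Y ω)) (A ω, W ω, Y ω))
      - p ω * Real.log (pm p Y (Y ω)))
      ≤ ∑ ω, (p ω * (f (A ω, W ω, Y ω) / pm p (fun ω => (A ω, W ω, Y ω)) (A ω, W ω, Y ω))
        - p ω) := by
    refine Finset.sum_le_sum fun ω _ => ?_
    rcases (hp ω).eq_or_lt with h0 | h0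
    · simp [← h0]
    have a1 := lt_of_lt_of_le h0 (le_pm p hp (fun ω => (A ω, Y ω)) ω)
    have a2 := lt_of_lt_of_le h0 (le_pm p hp (fun ω => (W ω, Y ω)) ω)
    have a3 := lt_of_lt_of_le h0 (le_pm p hp (fun ω => (A ω, W ω, Y ω)) ω)
    have a4 := lt_of_lt_of_le h0 (le_pm p hp Y ω)
    simp only [f]
    have hl := Real.log_le_sub_one_of_pos (div_pos (div_pos (mul_pos a1 a2) a4) a3)
    rw [Real.log_div (div_pos (mul_pos a1 a2) a4).ne' a3.ne',
      Real.log_div (mul_pos a1 a2).ne' a4.ne', Real.log_mul a1.ne' a2.ne'] at hl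
    have := mul_le_mul_of_nonneg_left hl (hp ω)
    linarith
  simp only [Finset.sum_sub_distrib, Finset.sum_add_distrib] at key
  simp only [ent_eq]
  linarith

/-- The equivocation lower bound (equations (ev02)–(ev0-IB)): if the Markov chain
condition `I(W1;Y2|V1,V2,U) = 0` holds, then
`H(W1|Y2) ≥ H(V1|V2,U) − H(V1|Y2,V2,U,W1) − I(V1;Y2|V2,U)`. -/
theorem equivocation_lower_bound
    {Ω αW α1 α2 αU β2 : Type*} [Fintype Ω] [Fintype αW] [Fintype α1] [Fintype α2]
    [Fintype αU] [Fintype β2]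
    (p : Ω → ℝ) (hp : ∀ ω, 0 ≤ p ω) (hp1 : ∑ ω, p ω = 1)
    (W1 : Ω → αW) (V1 : Ω → α1) (V2 : Ω → α2) (U : Ω → αU) (Y2 : Ω → β2)
    (hMarkov : condMutI p W1 Y2 (fun ω => (V1 ω, V2 ω, U ω)) = 0) :
    condEnt p W1 Y2
      ≥ condEnt p V1 (fun ω => (V2 ω, U ω))
        - condEnt p V1 (fun ω => (Y2 ω, V2 ω, U ω, W1 ω))
        - condMutI p V1 Y2 (fun ω => (V2 ω, U ω)) := by
  have h1 := ent_mono p hp (fun ω => (V1 ω, Y2 ω, V2 ω, U ω))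
    (fun ω => (V1 ω, Y2 ω, V2 ω, U ω, W1 ω)) (by
      intro a b h
      simp only [Prod.mk.injEq] at h ⊢
      tauto)
  have h2 := ent_submod p hp (fun ω => (V2 ω, U ω)) W1 Y2
  have h3 := ent_mono p hp (fun ω => (Y2 ω, V2 ω, U ω, W1 ω))
    (fun ω => ((V2 ω, U ω), W1 ω, Y2 ω)) (by
      intro a b h
      simp only [Prod.mk.injEq] at h ⊢
      tauto)
  have h4 := ent_mono p hp (fun ω => ((V2 ω, U ω), Y2 ω))
    (fun ω => (Y2 ω, V2 ω, U ω)) (by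
      intro a b h
      simp only [Prod.mk.injEq] at h ⊢
      tauto)
  simp only [condMutI, condEnt]
  linarith
end
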